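/- arXiv:1511.04598 — 2 statements merged into one kernel-verified Lean document; each statement's English description precedes it below -/
import Mathlib

section
/- (Aronszajn) The tree property fails at ℵ₁: there exists an ℵ₁-Aronszajn tree, i.e., a tree of height ω₁ all of whose levels are countable (cardinality < ℵ₁) and which has no chain of order type ω₁ (no cofinal branch). -/
open Cardinal Ordinal

/-- A tree: a partial order in which the set of strict predecessors of every element
is well-ordered by `<`. -/
structure IsTree (T : Type*) [PartialOrder T] : Prop where
  wo : ∀ t : T, IsWellOrder {s : T // s < t} (fun a b => (a : T) < (b : T))

/-- The height of an element `t` of a tree: the order type of its set of strict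
predecessors. -/
noncomputable def treeHeight {T : Type*} [PartialOrder T] (h : IsTree T) (t : T) : Ordinal :=
  @Ordinal.type {s : T // s < t} (fun a b => (a : T) < (b : T)) (h.wo t)

/-- The `α`-th level of a tree: the set of its elements of height `α`. -/
def treeLevel {T : Type*} [PartialOrder T] (h : IsTree T) (α : Ordinal) : Set T :=
  {t : T | treeHeight h t = α}

/-- A `κ`-tree: a tree of height `κ` (levels are nonempty exactly for the ordinals
below `κ`) all of whose levels have cardinality `< κ`. -/
structure IsKappaTree {T : Type*} [PartialOrder T] (κ : Cardinal) (h : IsTree T) : Prop where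
  height_lt : ∀ t : T, treeHeight h t < κ.ord
  levels_nonempty : ∀ α : Ordinal, α < κ.ord → (treeLevel h α).Nonempty
  levels_small : ∀ α : Ordinal, #(treeLevel h α) < κ

/-- A cofinal branch of a `κ`-tree: a chain meeting every level below `κ`. -/
def IsCofinalBranch {T : Type*} [PartialOrder T] (h : IsTree T) (κ : Cardinal)
    (B : Set T) : Prop :=
  IsChain (· < ·) B ∧ ∀ α : Ordinal, α < κ.ord → ∃ t ∈ B, treeHeight h t = α

open Set

/-- A family `e b : W → ℕ`, relevant only on `Iio b`, of finite-to-one functions which pairwise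
agree up to finitely many values on common initial segments. -/
structure IsCoherentFamily {W : Type*} [LinearOrder W] (e : W → W → ℕ) : Prop where
  finite_le : ∀ b k, {c | c < b ∧ e b c ≤ k}.Finite
  finite_ne : ∀ a b, {c | c < a ∧ c < b ∧ e a c ≠ e b c}.Finite

theorem exists_isCoherentFamily {W : Type*} [LinearOrder W] [WellFoundedLT W]
    (hW : ∀ b : W, (Iio b).Countable) : ∃ e : W → W → ℕ, IsCoherentFamily e := by
  choose ν hν using fun b => Set.countable_iff_exists_injOn.1 (hW b)
  have hmin (b c : W) : ∃ p, c < b → (c ≤ p ∧ p < b ∧ ∀ a, c ≤ a → a < b → ν b p ≤ ν b a) := by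
    by_cases hcb : c < b
    · obtain ⟨p, ⟨hp₁, hp₂⟩, hp⟩ :=
        exists_minimalFor_of_wellFoundedLT (fun a => c ≤ a ∧ a < b) (ν b) ⟨c, le_rfl, hcb⟩
      refine ⟨p, fun _ => ⟨hp₁, hp₂, fun a h₁ h₂ => ?_⟩⟩
      rcases le_total (ν b p) (ν b a) with h | h
      · exact h
      · exact hp ⟨h₁, h₂⟩ h
    · exact ⟨b, fun h => absurd h hcb⟩
  choose p hp using hmin
  classical
  let step (b : W) (rec : ∀ a, a < b → W → ℕ) (c : W) : ℕ :=
    if h : p b c < b then max (ν b (p b c)) (rec (p b c) h c) else 0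
  let e : W → W → ℕ := WellFoundedLT.fix step
  have he (b c : W) (hc : c < b) : e b c = max (ν b (p b c)) (e (p b c) c) := by
    have h := congrFun (WellFoundedLT.fix_eq step b) c
    exact h.trans (dif_pos (hp b c hc).2.1)
  have hfin (b : W) (k : ℕ) : {a | a < b ∧ ν b a ≤ k}.Finite := by
    refine Set.Finite.of_finite_image ((finite_Iic k).subset ?_)
      ((hν b).mono fun a ha => ha.1)
    rintro _ ⟨a, ha, rfl⟩
    exact ha.2
  have key (b : W) : (∀ k, {c | c < b ∧ e b c ≤ k}.Finite) ∧
      ∀ a < b, {c | c < a ∧ e a c ≠ e b c}.Finite := by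
    induction b using WellFoundedLT.induction with
    | ind b ih =>
    have hne (x y : W) (hx : x < b) (hy : y < b) : {c | c < x ∧ c < y ∧ e x c ≠ e y c}.Finite := by
      rcases lt_trichotomy x y with h | rfl | h
      · exact ((ih y hy).2 x h).subset fun c hc => ⟨hc.1, hc.2.2⟩
      · simp
      · exact ((ih x hx).2 y h).subset fun c hc => ⟨hc.2.1, hc.2.2.symm⟩
    constructor
    · intro k
      refine ((hfin b k).biUnion (t := fun a => insert a {c | c < a ∧ e a c ≤ k})
        fun a ha => ((ih a ha.1).1 k).insert a).subset ?_
      rintro c ⟨hc, hk⟩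
      obtain ⟨h₁, h₂, -⟩ := hp b c hc
      rw [he b c hc, max_le_iff] at hk
      refine mem_biUnion (x := p b c) ⟨h₂, hk.1⟩ ?_
      rcases h₁.eq_or_lt with h | h
      · exact Or.inl h
      · exact Or.inr ⟨h, hk.2⟩
    · intro a hab
      refine ((hfin b (ν b a)).biUnion
        (t := fun x => insert x ({c | c < x ∧ e x c ≤ ν b x} ∪ {c | c < x ∧ c < a ∧ e x c ≠ e a c}))
        fun x hx => (((ih x hx.1).1 _).union (hne x a hx.1 hab)).insert x).subset ?_
      rintro c ⟨hc, hk⟩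
      obtain ⟨h₁, h₂, h₃⟩ := hp b c (hc.trans hab)
      rw [he b c (hc.trans hab)] at hk
      refine mem_biUnion (x := p b c) ⟨h₂, h₃ a hc.le hab⟩ ?_
      rcases h₁.eq_or_lt with h | h
      · exact Or.inl h
      · right
        rcases le_total (e (p b c) c) (ν b (p b c)) with h' | h'
        · exact Or.inl ⟨h, h'⟩
        · rw [max_eq_right h'] at hk
          exact Or.inr ⟨h, hc, hk.symm⟩
  refine ⟨e, fun b => (key b).1, fun a b => ?_⟩
  rcases lt_trichotomy a b with h | rfl | h
  · exact ((key b).2 a h).subset fun c hc => ⟨hc.1, hc.2.2⟩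
  · simp
  · exact ((key a).2 b h).subset fun c hc => ⟨hc.2.1, hc.2.2.symm⟩

/-- The finite modifications of the functions `e a` restricted to `Iio a`, extended by zero. -/
@[ext]
structure CoherentNode {W : Type*} [LinearOrder W] (e : W → W → ℕ) where
  dom : W
  val : W → ℕ
  val_eq_zero : ∀ c, dom ≤ c → val c = 0
  finite_ne : {c | c < dom ∧ val c ≠ e dom c}.Finite

namespace CoherentNode

variable {W : Type*} [LinearOrder W] {e : W → W → ℕ}

instance : PartialOrder (CoherentNode e) where
  le s t := s.dom ≤ t.dom ∧ ∀ c < s.dom, s.val c = t.val c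
  le_refl s := ⟨le_rfl, fun _ _ => rfl⟩
  le_trans s t u hst htu :=
    ⟨hst.1.trans htu.1, fun c hc => (hst.2 c hc).trans (htu.2 c (hc.trans_le hst.1))⟩
  le_antisymm s t hst hts := by
    have hd : s.dom = t.dom := hst.1.antisymm hts.1
    refine CoherentNode.ext hd (funext fun c => ?_)
    rcases lt_or_ge c s.dom with hc | hc
    · exact hst.2 c hc
    · rw [s.val_eq_zero c hc, t.val_eq_zero c (hd ▸ hc)]

theorem le_def {s t : CoherentNode e} :
    s ≤ t ↔ s.dom ≤ t.dom ∧ ∀ c < s.dom, s.val c = t.val c := Iff.rfl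

theorem lt_def {s t : CoherentNode e} :
    s < t ↔ s.dom < t.dom ∧ ∀ c < s.dom, s.val c = t.val c := by
  rw [lt_iff_le_not_ge, le_def, le_def]
  constructor
  · rintro ⟨⟨h₁, h₂⟩, h₃⟩
    refine ⟨lt_of_not_ge fun h => h₃ ⟨h, fun c hc => (h₂ c (hc.trans_le h)).symm⟩, h₂⟩
  · rintro ⟨h₁, h₂⟩
    exact ⟨⟨h₁.le, h₂⟩, fun h => h.1.not_gt h₁⟩

theorem eq_of_le_of_dom_eq {s t : CoherentNode e} (h : s ≤ t) (hd : s.dom = t.dom) : s = t :=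
  h.eq_of_not_lt fun hlt => (lt_def.1 hlt).1.ne hd

/-- The restriction of a node to a smaller domain. -/
noncomputable def restrict (he : IsCoherentFamily e) (t : CoherentNode e) (a : W)
    (ha : a ≤ t.dom) : CoherentNode e where
  dom := a
  val c := if c < a then t.val c else 0
  val_eq_zero c hc := if_neg hc.not_gt
  finite_ne := by
    refine (t.finite_ne.union (he.finite_ne a t.dom)).subset ?_
    rintro c ⟨hc, hne⟩
    rw [if_pos hc] at hne
    by_cases h : t.val c = e t.dom c
    · exact Or.inr ⟨hc, hc.trans_le ha, fun h' => hne (h.trans h'.symm)⟩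
    · exact Or.inl ⟨hc.trans_le ha, h⟩

/-- The function `e a` as a node. -/
noncomputable def base (e : W → W → ℕ) (a : W) : CoherentNode e where
  dom := a
  val c := if c < a then e a c else 0
  val_eq_zero c hc := if_neg hc.not_gt
  finite_ne := by
    convert Set.finite_empty (α := W)
    ext c
    simp +contextual

/-- The predecessors of a node `t` are its restrictions to the elements below `t.dom`. -/
noncomputable def predIso (he : IsCoherentFamily e) (t : CoherentNode e) :
    (fun a b : {s : CoherentNode e // s < t} => (a : CoherentNode e) < (b : CoherentNode e)) ≃r
      (fun a b : Iio t.dom => a < b) where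
  toFun s := ⟨s.1.dom, (lt_def.1 s.2).1⟩
  invFun a := ⟨t.restrict he a.1 (le_of_lt a.2), lt_def.2 ⟨a.2, fun _ hc => if_pos hc⟩⟩
  left_inv s := by
    have hs := lt_def.1 s.2
    refine Subtype.ext (eq_of_le_of_dom_eq (le_def.2 ⟨le_rfl, fun c hc => ?_⟩) rfl)
    exact (if_pos hc).trans (hs.2 c hc).symm
  right_inv a := rfl
  map_rel_iff' := by
    intro a b
    refine ⟨fun h => lt_def.2 ⟨h, fun c hc => ?_⟩, fun h => (lt_def.1 h).1⟩
    have ha := lt_def.1 a.2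
    have hb := lt_def.1 b.2
    exact (ha.2 c hc).trans (hb.2 c (lt_trans hc h)).symm

theorem isTree [WellFoundedLT W] (he : IsCoherentFamily e) : IsTree (CoherentNode e) :=
  ⟨fun t => (predIso he t).toRelEmbedding.isWellOrder⟩

theorem treeHeight_eq [WellFoundedLT W] (he : IsCoherentFamily e) (t : CoherentNode e) :
    treeHeight (isTree he) t = typein (α := W) (· < ·) t.dom := by
  have := (isTree he).wo t
  exact (predIso he t).ordinalType_congr

theorem countable_dom_eq (hW : ∀ b : W, (Iio b).Countable) (a : W) :
    {t : CoherentNode e | t.dom = a}.Countable := by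
  have : Countable (Iio a) := (hW a).to_subtype
  have hfin (t : {t : CoherentNode e | t.dom = a}) :
      (Function.support fun c : Iio a => (t.1.val c : ℤ) - e a c).Finite := by
    obtain ⟨t, rfl⟩ := t
    refine Set.Finite.of_finite_image (f := Subtype.val) (t.finite_ne.subset ?_)
      Subtype.val_injective.injOn
    rintro _ ⟨c, hc, rfl⟩
    exact ⟨c.2, fun h => hc (by simp [h])⟩
  refine Set.countable_coe_iff.1 (Function.Injective.countable
    (f := fun t => Finsupp.ofSupportFinite _ (hfin t)) ?_)
  intro s t hst
  refine Subtype.ext (eq_of_le_of_dom_eq (le_def.2 ⟨?_, fun c hc => ?_⟩) (s.2.trans t.2.symm))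
  · exact (s.2.trans t.2.symm).le
  · have h := DFunLike.congr_fun hst ⟨c, hc.trans_eq s.2⟩
    simpa [Finsupp.ofSupportFinite_coe] using h

theorem finite_val_eq (he : IsCoherentFamily e) (t : CoherentNode e) (k : ℕ) :
    {c | c < t.dom ∧ t.val c = k}.Finite := by
  refine (t.finite_ne.union (he.finite_le t.dom k)).subset ?_
  rintro c ⟨hc, hk⟩
  by_cases h : t.val c = e t.dom c
  · exact Or.inr ⟨hc, (h.symm.trans hk).le⟩
  · exact Or.inl ⟨hc, h⟩

end CoherentNode

/-- A function to `ℕ` whose restrictions to all proper initial segments are finite-to-one can only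
exist on a countable linear order. -/
theorem countable_of_finite_fibers_below {W : Type*} [LinearOrder W] (g : W → ℕ)
    (hg : ∀ b k, {c | c < b ∧ g c = k}.Finite) : Countable W := by
  refine Function.Injective.countable (f := fun b => (g b, {c | c < b ∧ g c = g b}.ncard)) ?_
  have hlt (a b : W) (hab : a < b) (h : g a = g b) :
      {c | c < a ∧ g c = g a}.ncard < {c | c < b ∧ g c = g b}.ncard := by
    refine Set.ncard_lt_ncard ⟨fun c hc => ⟨hc.1.trans hab, hc.2.trans h⟩, fun hsub => ?_⟩ (hg b _)
    exact lt_irrefl a (hsub ⟨hab, h⟩).1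
  intro a b hab
  obtain ⟨h₁, h₂⟩ := Prod.mk.inj hab
  rcases lt_trichotomy a b with h | h | h
  · exact absurd h₂ (hlt a b h h₁).ne
  · exact h
  · exact absurd h₂ (hlt b a h h₁.symm).ne'

theorem CoherentNode.countable_of_isChain {W : Type*} [LinearOrder W] {e : W → W → ℕ}
    (he : IsCoherentFamily e) (hW : ∀ b : W, (Iio b).Countable) {B : Set (CoherentNode e)}
    (hB : IsChain (· < ·) B) (hdom : ∀ a, ∃ t ∈ B, t.dom = a) : Countable W := by
  by_contra hcount
  have hsucc (a : W) : ∃ b, a < b := by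
    by_contra! h
    refine hcount (Set.countable_univ_iff.1 (((hW a).insert a).mono fun c _ => ?_))
    exact (h c).eq_or_lt
  choose s hs using hsucc
  choose t htB ht using hdom
  have hagree (a b c : W) (ha : c < a) (hb : c < b) : (t a).val c = (t b).val c := by
    by_cases hab : t a = t b
    · rw [hab]
    · rcases hB (htB a) (htB b) hab with h | h
      · exact (lt_def.1 h).2 c (by rwa [ht])
      · exact ((lt_def.1 h).2 c (by rwa [ht])).symm
  refine hcount (countable_of_finite_fibers_below (fun c => (t (s c)).val c) fun b k => ?_)
  refine (finite_val_eq he (t b) k).subset ?_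
  rintro c ⟨hc, hk⟩
  exact ⟨by rwa [ht], (hagree b (s c) c hc (hs c)).trans hk⟩

/-- (Aronszajn) The tree property fails at `ℵ₁`: there exists an `ℵ₁`-Aronszajn tree,
i.e. a tree of height `ω₁` all of whose levels are countable (of cardinality `< ℵ₁`)
with no cofinal branch. -/
theorem exists_aleph1_aronszajn_tree :
    ∃ (T : Type) (inst : PartialOrder T) (h : @IsTree T inst),
      @IsKappaTree T inst (aleph 1) h ∧
      ∀ B : Set T, ¬ @IsCofinalBranch T inst h (aleph 1) B := by
  let W : Type := (aleph 1).ord.ToType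
  have htype : type (α := W) (· < ·) = (aleph 1).ord := type_toType _
  have hcard : #W = aleph 1 := by rw [mk_toType, card_ord]
  have hW (b : W) : (Iio b).Countable := by
    rw [← le_aleph0_iff_set_countable, ← lt_aleph_one_iff]
    exact (mk_Iio_lt b (by rw [hcard, htype])).trans_eq hcard
  obtain ⟨e, he⟩ := exists_isCoherentFamily hW
  refine ⟨CoherentNode e, inferInstance, CoherentNode.isTree he, ⟨fun t => ?_, fun α hα => ?_,
    fun α => ?_⟩, fun B hB => ?_⟩
  · rw [CoherentNode.treeHeight_eq he]
    exact typein_lt_self t.dom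
  · obtain ⟨a, ha⟩ := typein_surj (α := W) (· < ·) (hα.trans_eq htype.symm)
    exact ⟨CoherentNode.base e a, (CoherentNode.treeHeight_eq he _).trans ha⟩
  · rw [lt_aleph_one_iff, le_aleph0_iff_set_countable]
    rcases (treeLevel (CoherentNode.isTree he) α).eq_empty_or_nonempty with h | ⟨t, ht⟩
    · rw [h]
      exact countable_empty
    · refine (CoherentNode.countable_dom_eq hW t.dom).mono fun s hs => ?_
      have hst : treeHeight (CoherentNode.isTree he) s = treeHeight (CoherentNode.isTree he) t :=
        Eq.trans hs ht.symm
      rw [CoherentNode.treeHeight_eq he, CoherentNode.treeHeight_eq he] at hst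
      exact typein_injective _ hst
  · have hcount : Countable W := by
      refine CoherentNode.countable_of_isChain he hW hB.1 fun a => ?_
      obtain ⟨t, htB, ht⟩ := hB.2 _ (typein_lt_self a)
      rw [CoherentNode.treeHeight_eq he] at ht
      exact ⟨t, htB, typein_injective _ ht⟩
    exact aleph0_lt_aleph_one.not_ge (hcard.ge.trans (mk_le_aleph0_iff.2 hcount))
end

section
/- (Specker) For every infinite cardinal κ, if κ^{<κ} = κ (i.e., the cardinality of the set of all sequences of elements of κ of length < κ equals κ), then the tree property fails at κ⁺: there exists a κ⁺-Aronszajn tree, i.e., a tree of height κ⁺ all of whose levels have cardinality < κ⁺ and which has no chain of order type κ⁺. -/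
open Cardinal Ordinal

universe u

namespace Specker

open Set

theorem isRegular_of_powerlt_self {κ : Cardinal.{u}} (hκ : ℵ₀ ≤ κ) (hpow : κ ^< κ = κ) :
    κ.IsRegular := by
  refine ⟨hκ, ?_⟩
  by_contra! hcof
  exact (lt_power_cof_ord hκ).not_ge ((le_powerlt κ hcof).trans hpow.le)

theorem mk_Iic_toType_lt {c : Cardinal.{u}} (hc : ℵ₀ ≤ c) (k : c.ord.ToType) : #(Iic k) < c :=
  (mk_Iic_lt k (by simp) (by simpa using hc)).trans_eq (mk_ord_toType c)

theorem mk_small_subsets_le {κ : Cardinal.{u}} (hκ : ℵ₀ ≤ κ) (hpow : κ ^< κ = κ)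
    {X : Type u} (hX : #X ≤ κ) : #{s : Set X // #s < κ} ≤ κ := by
  let code : (Σ k : κ.ord.ToType, Iio k → X) → Set X := fun p => range p.2
  have hcode : {s : Set X | #s < κ} ⊆ range code := by
    intro s hs
    obtain ⟨k, hk⟩ := typein_surj (α := κ.ord.ToType) (· < ·) (o := (#s).ord)
      (by rw [type_toType]; exact ord_lt_ord.2 hs)
    have hcard : #(Iio k) = #s := by
      have h := card_typein (r := ((· < ·) : κ.ord.ToType → κ.ord.ToType → Prop)) k
      rw [hk, card_ord] at h
      exact h.symm
    obtain ⟨f⟩ := Cardinal.eq.1 hcard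
    exact ⟨⟨k, fun x => f x⟩, by
      change range (Subtype.val ∘ f) = s
      rw [f.surjective.range_comp, Subtype.range_coe]⟩
  calc #{s : Set X // #s < κ} ≤ #(range code) := mk_le_mk_of_subset hcode
    _ ≤ #(Σ k : κ.ord.ToType, Iio k → X) := mk_range_le
    _ ≤ Cardinal.sum fun _ : κ.ord.ToType => κ := by
      rw [mk_sigma]
      refine sum_le_sum _ _ fun k => ?_
      calc #(Iio k → X) = #X ^ #(Iio k) := by simp
        _ ≤ κ ^ #(Iio k) := power_le_power_right hX
        _ ≤ κ := (le_powerlt κ ((mk_le_mk_of_subset Iio_subset_Iic_self).trans_lt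
          (mk_Iic_toType_lt hκ k))).trans hpow.le
    _ = κ := by simp [mul_eq_self hκ]

section Coherent

variable {I K : Type u} [LinearOrder I] [WellFoundedLT I] [LinearOrder K] [WellFoundedLT K]

/-- The recursion defining a coherent family: `e a ξ` is computed from `e (c a i) ξ`, where `i` is
least such that the `i`-th point of the enumeration `c a` of `Iio a` is at least `ξ`. -/
theorem exists_walk_family [Nonempty K] (hI : ∀ a : I, #(Iio a) ≤ #K) :
    ∃ (c : I → K → I) (e : I → I → K), ∀ a ξ, ξ < a → ∃ i, ξ ≤ c a i ∧ c a i < a ∧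
      (∀ j, ξ ≤ c a j → c a j < a → i ≤ j) ∧ e a ξ = max (e (c a i) ξ) i := by
  classical
  have hsurj : ∀ a : I, ∃ f : K → I, Iio a ⊆ range f := by
    intro a
    obtain ⟨g⟩ := hI a
    rcases isEmpty_or_nonempty (Iio a) with h | h
    · exact ⟨fun _ => a, fun x hx => (h.false ⟨x, hx⟩).elim⟩
    · refine ⟨fun k => (Function.invFun g k).1, fun x hx => ⟨g ⟨x, hx⟩, ?_⟩⟩
      exact congrArg Subtype.val (Function.leftInverse_invFun g.injective ⟨x, hx⟩)
  choose c hc using hsurj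
  let step : ∀ a : I, (∀ b, b < a → I → K) → I → K := fun a ih ξ =>
    if h : ∃ i, ξ ≤ c a i ∧ c a i < a then
      max (ih (c a (wellFounded_lt.min {i | ξ ≤ c a i ∧ c a i < a} h))
        (wellFounded_lt.min_mem {i | ξ ≤ c a i ∧ c a i < a} h).2 ξ)
        (wellFounded_lt.min {i | ξ ≤ c a i ∧ c a i < a} h)
    else Classical.arbitrary K
  have wf : WellFounded ((· < ·) : I → I → Prop) := wellFounded_lt
  refine ⟨c, wf.fix step, fun a ξ hξ => ?_⟩
  have h : ∃ i, ξ ≤ c a i ∧ c a i < a := by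
    obtain ⟨i, hi⟩ := hc a hξ
    exact ⟨i, hi.ge, hi ▸ hξ⟩
  have hm := wellFounded_lt.min_mem {i | ξ ≤ c a i ∧ c a i < a} h
  refine ⟨_, hm.1, hm.2, fun j hj hja => wellFounded_lt.min_le
    (show j ∈ {i | ξ ≤ c a i ∧ c a i < a} from ⟨hj, hja⟩), ?_⟩
  rw [wf.fix_eq]
  exact dif_pos h

/-- A family of `< κ`-to-one functions `e a : Iio a → K`, any two of which differ at fewer than
`κ` points of their common domain. -/
theorem exists_coherent_family [Nonempty K] {κ : Cardinal.{u}} (hκ : κ.IsRegular)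
    (hK : ∀ k : K, #(Iic k) < κ) (hI : ∀ a : I, #(Iio a) ≤ #K) :
    ∃ e : I → I → K, (∀ a k, #{ξ | ξ < a ∧ e a ξ ≤ k} < κ) ∧
      ∀ a b, b ≤ a → #{ξ | ξ < b ∧ e a ξ ≠ e b ξ} < κ := by
  obtain ⟨c, e, he⟩ := exists_walk_family (I := I) (K := K) hI
  have hunion : ∀ s t : Set I, #s < κ → #t < κ → #(s ∪ t : Set I) < κ := fun s t hs ht =>
    (mk_union_le s t).trans_lt (add_lt_of_lt hκ.1 hs ht)
  have hbUnion : ∀ (k : K) (s : K → Set I), (∀ i ≤ k, #(s i) < κ) →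
      #(⋃ i ∈ Iic k, s i) < κ := fun k s hs =>
    (card_biUnion_lt_iff_forall_of_isRegular hκ (hK k)).2 hs
  have hsingle : ∀ x : I, #({x} : Set I) < κ := fun x => by
    rw [mk_singleton]; exact one_lt_aleph0.trans_le hκ.1
  have hempty : #(∅ : Set I) < κ := by
    rw [mk_eq_zero]; exact hκ.pos
  have hfiber : ∀ a k, #{ξ | ξ < a ∧ e a ξ ≤ k} < κ := by
    intro a
    induction a using WellFoundedLT.induction with
    | ind a ih =>
    intro k
    let s : K → Set I := fun i =>
      {c a i} ∪ if c a i < a then {ξ | ξ < c a i ∧ e (c a i) ξ ≤ k} else ∅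
    refine (mk_le_mk_of_subset (t := ⋃ i ∈ Iic k, s i) ?_).trans_lt (hbUnion k s fun i _ => ?_)
    · rintro ξ ⟨hξ, hle⟩
      obtain ⟨i, hi, hia, -, heq⟩ := he a ξ hξ
      rw [heq, max_le_iff] at hle
      refine mem_biUnion (x := i) hle.2 ?_
      rcases hi.eq_or_lt with h | h
      · exact Or.inl h
      · right
        rw [if_pos hia]
        exact ⟨h, hle.1⟩
    · refine hunion _ _ (hsingle _) ?_
      split_ifs with h
      · exact ih _ h k
      · exact hempty
  refine ⟨e, hfiber, ?_⟩
  intro a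
  induction a using WellFoundedLT.induction with
  | ind a ih =>
  intro b hb
  rcases hb.eq_or_lt with rfl | hb
  · simpa using hκ.pos
  obtain ⟨j, hbj, hja, -, -⟩ := he a b hb
  let s : K → Set I := fun i => {c a i} ∪ ({ξ | ξ < c a i ∧ e (c a i) ξ ≤ i} ∪
    if c a i < a then {ξ | ξ < c a i ∧ ξ < b ∧ e (c a i) ξ ≠ e b ξ} else ∅)
  refine (mk_le_mk_of_subset (t := ⋃ i ∈ Iic j, s i) ?_).trans_lt (hbUnion j s fun i _ => ?_)
  · rintro ξ ⟨hξ, hne⟩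
    obtain ⟨i, hi, hia, hmin, heq⟩ := he a ξ (hξ.trans hb)
    refine mem_biUnion (x := i) (hmin j (hξ.le.trans hbj) hja) ?_
    rcases hi.eq_or_lt with h | h
    · exact Or.inl h
    right
    rcases le_total (e (c a i) ξ) i with hle | hle
    · exact Or.inl ⟨h, hle⟩
    · right
      rw [if_pos hia]
      rw [heq, max_eq_left hle] at hne
      exact ⟨h, hξ, hne⟩
  · refine hunion _ _ (hsingle _) (hunion _ _ (hfiber _ _) ?_)
    split_ifs with h
    · rcases le_total b (c a i) with hle | hle
      · exact (mk_le_mk_of_subset fun ξ hξ => by exact ⟨hξ.2.1, hξ.2.2⟩).trans_lt (ih _ h b hle)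
      · exact (mk_le_mk_of_subset fun ξ hξ => by exact ⟨hξ.1, hξ.2.2.symm⟩).trans_lt (ih _ hb _ hle)
    · exact hempty

end Coherent

/-- A node of the tree of functions that differ from a member of the family `e` at fewer than `κ`
points. A function with domain `Iio top` is represented by its extension with value `k₀`. -/
@[ext]
structure Node {I K : Type u} [LinearOrder I] (κ : Cardinal.{u}) (e : I → I → K) (k₀ : K) where
  top : I
  fn : I → K
  fn_of_le : ∀ ξ, top ≤ ξ → fn ξ = k₀
  small : #{ξ | ξ < top ∧ fn ξ ≠ e top ξ} < κ

namespace Node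

variable {I K : Type u} [LinearOrder I] {κ : Cardinal.{u}} {e : I → I → K} {k₀ : K}

instance : PartialOrder (Node κ e k₀) where
  le s t := s.top ≤ t.top ∧ ∀ ξ < s.top, s.fn ξ = t.fn ξ
  le_refl s := ⟨le_rfl, fun _ _ => rfl⟩
  le_trans s t r hst htr :=
    ⟨hst.1.trans htr.1, fun ξ hξ => (hst.2 ξ hξ).trans (htr.2 ξ (hξ.trans_le hst.1))⟩
  le_antisymm s t hst hts := by
    have htop := hst.1.antisymm hts.1
    refine Node.ext htop (funext fun ξ => ?_)
    rcases lt_or_ge ξ s.top with h | h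
    · exact hst.2 ξ h
    · rw [s.fn_of_le ξ h, t.fn_of_le ξ (htop ▸ h)]

theorem lt_iff {s t : Node κ e k₀} :
    s < t ↔ s.top < t.top ∧ ∀ ξ < s.top, s.fn ξ = t.fn ξ := by
  constructor
  · intro h
    refine ⟨lt_of_le_of_ne h.le.1 fun htop => h.not_ge ⟨htop.ge, fun ξ hξ => ?_⟩, h.le.2⟩
    exact (h.le.2 ξ (htop ▸ hξ)).symm
  · exact fun h => lt_of_le_not_ge ⟨h.1.le, h.2⟩ fun h' => h.1.not_ge h'.1

open Classical in
/-- The restriction of a node to a smaller domain. -/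
noncomputable def restrict (hκ : ℵ₀ ≤ κ)
    (he : ∀ a b, b ≤ a → #{ξ | ξ < b ∧ e a ξ ≠ e b ξ} < κ)
    (t : Node κ e k₀) (b : I) (hb : b ≤ t.top) : Node κ e k₀ where
  top := b
  fn ξ := if ξ < b then t.fn ξ else k₀
  fn_of_le ξ hξ := if_neg hξ.not_gt
  small := by
    refine (mk_le_mk_of_subset ?_).trans_lt
      ((mk_union_le _ _).trans_lt (add_lt_of_lt hκ t.small (he t.top b hb)))
    rintro ξ ⟨hξ, hne⟩
    rw [if_pos hξ] at hne
    by_cases h : t.fn ξ = e t.top ξ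
    · exact Or.inr ⟨hξ, h ▸ hne⟩
    · exact Or.inl ⟨hξ.trans_le hb, h⟩

open Classical in
/-- The node given by the family `e` itself. -/
noncomputable def ofFamily (hκ : ℵ₀ ≤ κ) (e : I → I → K) (k₀ : K) (a : I) : Node κ e k₀ where
  top := a
  fn ξ := if ξ < a then e a ξ else k₀
  fn_of_le ξ hξ := if_neg hξ.not_gt
  small := by
    refine (mk_le_mk_of_subset (t := ∅) ?_).trans_lt (by
      rw [mk_eq_zero]; exact aleph0_pos.trans_le hκ)
    rintro ξ ⟨hξ, hne⟩
    exact hne (if_pos hξ)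

/-- The strict predecessors of a node are its restrictions to proper initial segments. -/
noncomputable def predIso (hκ : ℵ₀ ≤ κ)
    (he : ∀ a b, b ≤ a → #{ξ | ξ < b ∧ e a ξ ≠ e b ξ} < κ) (t : Node κ e k₀) :
    ((fun a b => (a : Node κ e k₀) < b) : {s // s < t} → {s // s < t} → Prop) ≃r
      ((· < ·) : Iio t.top → Iio t.top → Prop) where
  toFun s := ⟨s.1.top, (lt_iff.1 s.2).1⟩
  invFun b := ⟨t.restrict hκ he b b.2.le, lt_iff.2 ⟨b.2, fun _ hξ => if_pos hξ⟩⟩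
  left_inv s := by
    refine Subtype.ext (Node.ext rfl (funext fun ξ => ?_))
    change (if ξ < s.1.top then t.fn ξ else k₀) = s.1.fn ξ
    split_ifs with h
    · exact ((lt_iff.1 s.2).2 ξ h).symm
    · exact (s.1.fn_of_le ξ (not_lt.1 h)).symm
  right_inv _ := rfl
  map_rel_iff' {s r} := by
    change s.1.top < r.1.top ↔ s.1 < r.1
    refine ⟨fun h => lt_iff.2 ⟨h, fun ξ hξ => ?_⟩, fun h => (lt_iff.1 h).1⟩
    rw [(lt_iff.1 s.2).2 ξ hξ, (lt_iff.1 r.2).2 ξ (hξ.trans h)]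

theorem isTree [WellFoundedLT I] (hκ : ℵ₀ ≤ κ) (he : ∀ a b, b ≤ a → #{ξ | ξ < b ∧ e a ξ ≠ e b ξ} < κ) :
    IsTree (Node κ e k₀) :=
  ⟨fun t => (predIso hκ he t).toRelEmbedding.isWellOrder⟩

theorem treeHeight_eq [WellFoundedLT I] (hκ : ℵ₀ ≤ κ)
    (he : ∀ a b, b ≤ a → #{ξ | ξ < b ∧ e a ξ ≠ e b ξ} < κ)
    (h : IsTree (Node κ e k₀)) (t : Node κ e k₀) :
    treeHeight h t = typein (α := I) (· < ·) t.top := by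
  have := h.wo t
  rw [← type_Iio_lt]
  exact (predIso hκ he t).ordinalType_congr

theorem mk_top_eq_le (hκ : ℵ₀ ≤ κ) (hpow : κ ^< κ = κ) (hK : #K ≤ κ)
    (hI : ∀ a : I, #(Iio a) ≤ κ) (a : I) : #{t : Node κ e k₀ | t.top = a} ≤ κ := by
  have hX : #(Iio a × K) ≤ κ := by
    rw [mk_prod, Cardinal.lift_id, Cardinal.lift_id, ← mul_eq_self hκ]
    exact mul_le_mul' (hI a) hK
  refine le_trans ?_ (mk_small_subsets_le hκ hpow hX)
  have hsmall : ∀ t : {t : Node κ e k₀ | t.top = a},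
      #{p : Iio a × K | t.1.fn p.1 = p.2 ∧ p.2 ≠ e a p.1} < κ := by
    rintro ⟨t, rfl⟩
    refine (mk_le_of_injective (f := fun p => (⟨p.1.1.1, p.1.1.2, ?_⟩ :
      {ξ | ξ < t.top ∧ t.fn ξ ≠ e t.top ξ})) ?_).trans_lt t.small
    · rw [p.2.1]; exact p.2.2
    · rintro ⟨⟨x, k⟩, hk, hk'⟩ ⟨⟨y, l⟩, hl, hl'⟩ h
      have hxy : x = y := Subtype.ext (congrArg (fun z => z.1) h)
      subst hxy
      exact Subtype.ext (Prod.ext rfl (hk.symm.trans hl))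
  refine mk_le_of_injective (f := fun t => ⟨_, hsmall t⟩) ?_
  rintro ⟨s, hs⟩ ⟨t, ht⟩ h
  have hmem := fun (p : Iio a × K) => Set.ext_iff.1 (congrArg Subtype.val h) p
  refine Subtype.ext (Node.ext (hs.trans ht.symm) (funext fun ξ => ?_))
  rcases lt_or_ge ξ a with hξ | hξ
  · by_contra hne
    by_cases hsξ : s.fn ξ = e a ξ
    · exact hne ((hmem (⟨ξ, hξ⟩, t.fn ξ)).2 ⟨rfl, fun h' => hne (hsξ.trans h'.symm)⟩).1
    · exact hne ((hmem (⟨ξ, hξ⟩, s.fn ξ)).1 ⟨rfl, hsξ⟩).1.symm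
  · rw [s.fn_of_le ξ (hs ▸ hξ), t.fn_of_le ξ (ht ▸ hξ)]

theorem mk_fiber_lt [LinearOrder K] (hκ : ℵ₀ ≤ κ) (he : ∀ a k, #{ξ | ξ < a ∧ e a ξ ≤ k} < κ)
    (t : Node κ e k₀) (k : K) : #{ξ | ξ < t.top ∧ t.fn ξ = k} < κ := by
  refine (mk_le_mk_of_subset ?_).trans_lt
    ((mk_union_le _ _).trans_lt (add_lt_of_lt hκ t.small (he t.top k)))
  rintro ξ ⟨hξ, rfl⟩
  by_cases h : t.fn ξ = e t.top ξ
  · exact Or.inr ⟨hξ, h.ge⟩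
  · exact Or.inl ⟨hξ, h⟩

end Node

/-- A function from a set of size `> κ` whose initial segments have size `≤ κ` into a set of size
`≤ κ` has a fiber that meets an initial segment in at least `κ` points. -/
theorem exists_large_bounded_fiber {I K : Type u} [LinearOrder I] {κ : Cardinal.{u}}
    (hκ : ℵ₀ ≤ κ) (hK : #K ≤ κ) (hI : ∀ a : I, #(Iic a) ≤ κ) (hlarge : κ < #I) (F : I → K) :
    ∃ a k, κ ≤ #{ξ | ξ < a ∧ F ξ = k} := by
  have hbound : ∀ {ι : Type u} (s : ι → Set I), #ι ≤ κ → (∀ i, #(s i) ≤ κ) →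
      #(⋃ i, s i) ≤ κ := fun s hι hs => by
    rw [← mul_eq_self hκ]
    exact (mk_iUnion_le s).trans (mul_le_mul' hι (ciSup_le' hs))
  obtain ⟨k, hk⟩ : ∃ k, κ < #(F ⁻¹' {k}) := by
    by_contra! h
    have := hbound _ hK h
    rw [← preimage_iUnion, iUnion_of_singleton, preimage_univ, mk_univ] at this
    exact this.not_gt hlarge
  obtain ⟨S, hS, hSκ⟩ := le_mk_iff_exists_subset.1 hk.le
  obtain ⟨a, ha⟩ : ∃ a, a ∉ ⋃ s : S, Iic s.1 := by
    by_contra! h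
    have := hbound (fun s : S => Iic s.1) hSκ.le fun s => hI s
    rw [eq_univ_of_forall h, mk_univ] at this
    exact this.not_gt hlarge
  refine ⟨a, k, hSκ.ge.trans (mk_le_mk_of_subset fun ξ hξ => ⟨?_, hS hξ⟩)⟩
  by_contra h
  exact ha (mem_iUnion.2 ⟨⟨ξ, hξ⟩, not_lt.1 h⟩)

end Specker

open Specker Set in
/-- (Specker) For every infinite cardinal `κ`, if `κ ^< κ = κ` then the tree property
fails at `κ⁺`: there exists a `κ⁺`-Aronszajn tree, i.e. a tree of height `κ⁺` all of
whose levels have cardinality `< κ⁺` and which has no cofinal branch. -/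
theorem specker_exists_succ_aronszajn_tree (κ : Cardinal.{u}) (hκ : ℵ₀ ≤ κ)
    (hpow : κ ^< κ = κ) :
    ∃ (T : Type u) (inst : PartialOrder T) (h : @IsTree T inst),
      @IsKappaTree T inst (Order.succ κ) h ∧
      ∀ B : Set T, ¬ @IsCofinalBranch T inst h (Order.succ κ) B := by
  let K := κ.ord.ToType
  let I := (Order.succ κ).ord.ToType
  have hκ' : ℵ₀ ≤ Order.succ κ := hκ.trans (Order.le_succ κ)
  have hKcard : #K = κ := mk_ord_toType κ
  have hIic : ∀ a : I, #(Iic a) ≤ κ := fun a => Order.lt_succ_iff.1 (mk_Iic_toType_lt hκ' a)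
  have hIio : ∀ a : I, #(Iio a) ≤ κ := fun a =>
    (mk_le_mk_of_subset Iio_subset_Iic_self).trans (hIic a)
  have : Nonempty K := mk_ne_zero_iff.1 (hKcard.trans_ne (aleph0_pos.trans_le hκ).ne')
  have : NoMaxOrder I := noMaxOrder hκ'
  obtain ⟨e, hfiber, he⟩ := exists_coherent_family (I := I)
    (isRegular_of_powerlt_self hκ hpow) (mk_Iic_toType_lt hκ) fun a => (hIio a).trans hKcard.ge
  let k₀ : K := Classical.arbitrary K
  have hT : IsTree (Node κ e k₀) := Node.isTree hκ he
  have hheight := Node.treeHeight_eq (k₀ := k₀) hκ he hT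
  have hsurj : ∀ α < (Order.succ κ).ord, ∃ a : I, typein (α := I) (· < ·) a = α :=
    fun α hα => typein_surj _ (by rwa [type_toType])
  refine ⟨Node κ e k₀, inferInstance, hT, ⟨fun t => ?_, fun α hα => ?_, fun α => ?_⟩, ?_⟩
  · rw [hheight]
    exact typein_lt_self t.top
  · obtain ⟨a, ha⟩ := hsurj α hα
    exact ⟨Node.ofFamily hκ e k₀ a, (hheight _).trans ha⟩
  · rw [Order.lt_succ_iff]
    rcases (treeLevel hT α).eq_empty_or_nonempty with h | ⟨t, ht⟩
    · simp [h]
    · refine (mk_le_mk_of_subset fun s hs => ?_).trans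
        (Node.mk_top_eq_le hκ hpow hKcard.le hIio t.top)
      refine typein_injective (α := I) (· < ·) ?_
      rw [← hheight, ← hheight]
      exact Eq.trans hs ht.symm
  · rintro B ⟨hchain, hB⟩
    have hnode : ∀ a : I, ∃ t ∈ B, t.top = a := fun a => by
      obtain ⟨t, htB, ht⟩ := hB _ (typein_lt_self a)
      exact ⟨t, htB, typein_injective (α := I) (· < ·) ((hheight t).symm.trans ht)⟩
    choose t htB ht using hnode
    choose n hn using fun a : I => exists_gt a
    have hagree : ∀ a b ξ, ξ < a → ξ < b → (t a).fn ξ = (t b).fn ξ := by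
      intro a b ξ ha hb
      by_cases hab : t a = t b
      · rw [hab]
      rcases hchain (htB a) (htB b) hab with h | h
      · exact h.le.2 ξ (by rwa [ht])
      · exact (h.le.2 ξ (by rwa [ht])).symm
    obtain ⟨a, k, hak⟩ := exists_large_bounded_fiber hκ hKcard.le hIic
      (by rw [mk_ord_toType]; exact Order.lt_succ κ) fun ξ : I => (t (n ξ)).fn ξ
    refine (hak.trans (mk_le_mk_of_subset ?_)).not_gt (Node.mk_fiber_lt hκ hfiber (t a) k)
    rintro ξ ⟨hξ, hk⟩
    exact ⟨by rwa [ht], (hagree _ _ ξ hξ (hn ξ)).trans hk⟩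
end
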